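/- arXiv:2007.11582 — 7 statements merged into one kernel-verified Lean document; each statement's English description precedes it below -/
import Mathlib

section
/- Let N ≥ 2 be a natural number, let c, s, Δ be reals with 0 < s < c and Δ > 0, and let q ≥ 1 be a natural number such that (N − 1)·exp(−q·Δ/s) ≤ (c − s)/(2s). Let A and B be N×N complex Hermitian positive semidefinite matrices such that: the largest eigenvalue of A is at least c; the largest eigenvalue λ₁ of B is at most s; and λ₁ − λ₂ ≥ Δ, where λ₂ is the second-largest eigenvalue of B (listed with multiplicity). Then Tr(A^q) − Tr(B^q) ≥ s^{q−1}·(c − s)/2; in particular Tr(A^q) > Tr(B^q). -/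
open scoped ComplexOrder

theorem trace_pow_aux {N : ℕ} (A : Matrix (Fin N) (Fin N) ℂ) (hA : A.IsHermitian) (q : ℕ) :
    ((A ^ q).trace).re = ∑ i, hA.eigenvalues i ^ q := by
  have h : A ^ q = Unitary.conjStarAlgAut ℂ _ hA.eigenvectorUnitary
      ((Matrix.diagonal ((RCLike.ofReal : ℝ → ℂ) ∘ hA.eigenvalues)) ^ q) := by
    rw [map_pow, ← hA.spectral_theorem]
  rw [h, Unitary.conjStarAlgAut_apply, Matrix.trace_mul_comm, ← mul_assoc]
  simp only [Unitary.coe_star_mul_self, one_mul, Matrix.diagonal_pow, Matrix.trace_diagonal]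
  rw [Complex.re_sum]
  refine Finset.sum_congr rfl fun i _ => ?_
  simp only [Pi.pow_apply, Function.comp_apply]
  exact_mod_cast Complex.ofReal_re (hA.eigenvalues i ^ q)

/-- Trace separation for the power method: if `A` (YES accept operator) is Hermitian PSD with
largest eigenvalue at least `c`, and `B` (NO accept operator) is Hermitian PSD with largest
eigenvalue `λ₁ ≤ s` and second-largest eigenvalue `λ₂` satisfying `λ₁ - λ₂ ≥ Δ`, and
`(N - 1) * exp (-q * Δ / s) ≤ (c - s) / (2 * s)`, then
`Tr (A ^ q) - Tr (B ^ q) ≥ s ^ (q - 1) * (c - s) / 2`, so in particular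
`Tr (A ^ q) > Tr (B ^ q)`. -/
theorem stmt1 (N : ℕ) (hN : 2 ≤ N) (c s Δ : ℝ) (hs : 0 < s) (hsc : s < c) (hΔ : 0 < Δ)
    (q : ℕ) (hq : 1 ≤ q)
    (hqbig : ((N : ℝ) - 1) * Real.exp (-(q * Δ / s)) ≤ (c - s) / (2 * s))
    (A B : Matrix (Fin N) (Fin N) ℂ) (hA : A.PosSemidef) (hB : B.PosSemidef)
    (hAmax : ∃ i, c ≤ hA.isHermitian.eigenvalues i)
    (μ : Fin N → ℝ) (hanti : Antitone μ)
    (hperm : ∃ σ : Equiv.Perm (Fin N), ∀ i, μ i = hB.isHermitian.eigenvalues (σ i))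
    (hBmax : μ ⟨0, by omega⟩ ≤ s)
    (hgap : Δ ≤ μ ⟨0, by omega⟩ - μ ⟨1, by omega⟩) :
    s ^ (q - 1) * (c - s) / 2 ≤ ((A ^ q).trace).re - ((B ^ q).trace).re ∧
      ((B ^ q).trace).re < ((A ^ q).trace).re := by
  obtain ⟨i, hi⟩ := hAmax
  obtain ⟨σ, hσ⟩ := hperm
  have hApow : c ^ q ≤ ((A ^ q).trace).re := by
    rw [trace_pow_aux A hA.isHermitian q]
    calc c ^ q ≤ hA.isHermitian.eigenvalues i ^ q :=
          pow_le_pow_left₀ (by linarith) hi q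
      _ ≤ _ := Finset.single_le_sum
          (f := fun j => hA.isHermitian.eigenvalues j ^ q)
          (fun j _ => pow_nonneg (hA.eigenvalues_nonneg j) q) (Finset.mem_univ i)
  have hBtr : ((B ^ q).trace).re = ∑ j, μ j ^ q := by
    rw [trace_pow_aux B hB.isHermitian q, ← Equiv.sum_comp σ]
    exact Finset.sum_congr rfl fun j _ => by rw [hσ j]
  have hμ0 : ∀ j, 0 ≤ μ j := fun j => by rw [hσ j]; exact hB.eigenvalues_nonneg _
  clear hσ
  have hBpow : ((B ^ q).trace).re ≤ s ^ q + ((N : ℝ) - 1) * (s ^ q * Real.exp (-(q * Δ / s))) := by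
    rw [hBtr]
    obtain ⟨M, rfl⟩ : ∃ M, N = M + 1 := ⟨N - 1, by omega⟩
    rw [Fin.sum_univ_succ]
    have h0 : μ 0 ^ q ≤ s ^ q := pow_le_pow_left₀ (hμ0 _) hBmax q
    have h1 : ∀ j : Fin M, μ j.succ ^ q ≤ s ^ q * Real.exp (-(q * Δ / s)) := by
      intro j
      have a1 : μ j.succ ≤ μ ⟨1, by omega⟩ := hanti (by
        rw [Fin.le_def]; simp)
      have a2 : s - Δ ≤ s * Real.exp (-(Δ / s)) := by
        have := Real.add_one_le_exp (-(Δ / s))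
        have h2 := mul_le_mul_of_nonneg_left this hs.le
        have h3 : s * (-(Δ / s) + 1) = s - Δ := by field_simp; ring
        linarith
      have a3 : μ j.succ ≤ s * Real.exp (-(Δ / s)) := by linarith
      calc μ j.succ ^ q ≤ (s * Real.exp (-(Δ / s))) ^ q := pow_le_pow_left₀ (hμ0 _) a3 q
        _ = _ := by
          rw [mul_pow, ← Real.exp_nat_mul]
          congr 2; ring
    have h2 := Finset.sum_le_sum (s := Finset.univ) fun j _ => h1 j
    simp only [Finset.sum_const, Finset.card_univ, Fintype.card_fin, nsmul_eq_mul] at h2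
    push_cast
    rw [add_sub_cancel_right]
    linarith
  obtain ⟨k, rfl⟩ : ∃ k, q = k + 1 := ⟨q - 1, by omega⟩
  rw [Nat.add_sub_cancel]
  have hk : 0 < s ^ k := pow_pos hs k
  have e1 : s ^ k * c ≤ c ^ (k + 1) := by
    rw [pow_succ]
    exact mul_le_mul_of_nonneg_right (pow_le_pow_left₀ hs.le hsc.le k) (by linarith)
  have e2 := mul_le_mul_of_nonneg_left hqbig (pow_pos hs (k + 1)).le
  have e3 : s ^ (k + 1) * ((c - s) / (2 * s)) = s ^ k * (c - s) / 2 := by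
    field_simp; ring
  have e4 : s ^ (k + 1) = s ^ k * s := pow_succ s k
  have e5 : 0 < s ^ k * (c - s) / 2 := by
    have := mul_pos hk (sub_pos.2 hsc)
    linarith
  have main : s ^ k * (c - s) / 2 ≤ ((A ^ (k + 1)).trace).re - ((B ^ (k + 1)).trace).re := by
    rw [e3] at e2
    nlinarith
  exact ⟨main, by linarith⟩
end

section
/- Let N ≥ 2 be a natural number, let t > 0, and let E₁ ≤ E₂ ≤ ⋯ ≤ E_N be reals with E₁ < E_N and 0 ≤ E_j·t ≤ π/2 for every j. Let p₁, …, p_N be nonnegative reals with Σ_j p_j = 1, and let ⟨E⟩ be a real number with Σ_j p_j·E_j ≤ ⟨E⟩. Then Σ_j p_j·cos²(E_j·t/2) ≥ cos²(E₁·t/2)·(1 − x) + cos²(E_N·t/2)·x, where x = (⟨E⟩ − E₁)/(E_N − E₁). -/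
open Real

theorem aux_chord (a b e t : ℝ) (ht : 0 < t) (hab : a < b) (hae : a ≤ e) (heb : e ≤ b)
    (ha : 0 ≤ a * t) (hb : b * t ≤ π / 2) :
    cos (a * t / 2) ^ 2 + (cos (b * t / 2) ^ 2 - cos (a * t / 2) ^ 2) / (b - a) * (e - a) ≤
      cos (e * t / 2) ^ 2 := by
  have hd : 0 < b - a := sub_pos.mpr hab
  have habt : a * t ≤ b * t := by gcongr
  have hpi := Real.pi_pos
  have hma : a * t ∈ Set.Icc (-(π / 2)) (π / 2) := ⟨by linarith, by linarith⟩
  have hmb : b * t ∈ Set.Icc (-(π / 2)) (π / 2) := ⟨by linarith, by linarith⟩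
  have w1 : 0 ≤ (b - e) / (b - a) := div_nonneg (by linarith) hd.le
  have w2 : 0 ≤ (e - a) / (b - a) := div_nonneg (by linarith) hd.le
  have w3 : (b - e) / (b - a) + (e - a) / (b - a) = 1 := by field_simp; ring
  have key := strictConcaveOn_cos_Icc.concaveOn.2 hma hmb w1 w2 w3
  simp only [smul_eq_mul] at key
  have he : (b - e) / (b - a) * (a * t) + (e - a) / (b - a) * (b * t) = e * t := by
    field_simp; ring
  rw [he] at key
  have h2 : ∀ y : ℝ, cos (y / 2) ^ 2 = 1 / 2 + cos y / 2 := by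
    intro y
    rw [Real.cos_sq]
    congr 3
    ring
  rw [h2, h2, h2]
  have : (b - e) / (b - a) = 1 - (e - a) / (b - a) := by field_simp; ring
  rw [this] at key
  have h3 : (1 / 2 + cos (b * t) / 2 - (1 / 2 + cos (a * t) / 2)) / (b - a) * (e - a)
      = (cos (b * t) - cos (a * t)) / 2 * ((e - a) / (b - a)) := by ring
  rw [h3]
  linarith

/-- Convexity bound for one-bit phase estimation: for energies
`E 0 ≤ E 1 ≤ ⋯ ≤ E (N-1)` with `E 0 < E (N-1)` and `0 ≤ E j * t ≤ π/2`, probabilities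
`p j` summing to `1`, and `⟨E⟩` with `∑ j, p j * E j ≤ ⟨E⟩`, the acceptance probability
`∑ j, p j * cos²(E j * t / 2)` is at least
`cos²(E₁ t / 2) (1 - x) + cos²(E_N t / 2) x` where `x = (⟨E⟩ - E₁)/(E_N - E₁)`. -/
theorem stmt3 (N : ℕ) (hN : 2 ≤ N) (t : ℝ) (ht : 0 < t)
    (E : Fin N → ℝ) (hmono : Monotone E)
    (hlt : E ⟨0, by omega⟩ < E ⟨N - 1, by omega⟩)
    (hrange : ∀ j, 0 ≤ E j * t ∧ E j * t ≤ π / 2)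
    (p : Fin N → ℝ) (hp : ∀ j, 0 ≤ p j) (hsum : ∑ j, p j = 1)
    (Eavg : ℝ) (hE : ∑ j, p j * E j ≤ Eavg) :
    cos (E ⟨0, by omega⟩ * t / 2) ^ 2 *
        (1 - (Eavg - E ⟨0, by omega⟩) / (E ⟨N - 1, by omega⟩ - E ⟨0, by omega⟩)) +
      cos (E ⟨N - 1, by omega⟩ * t / 2) ^ 2 *
        ((Eavg - E ⟨0, by omega⟩) / (E ⟨N - 1, by omega⟩ - E ⟨0, by omega⟩)) ≤
      ∑ j, p j * cos (E j * t / 2) ^ 2 := by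
  generalize_proofs h0 h1 at *
  set a := E ⟨0, h0⟩ with ha
  set b := E ⟨N - 1, h1⟩ with hb
  have hd : 0 < b - a := sub_pos.mpr hlt
  have hpi := Real.pi_pos
  have h0t : 0 ≤ a * t := (hrange _).1
  have hbt : b * t ≤ π / 2 := (hrange _).2
  have hpt : ∀ j, cos (a * t / 2) ^ 2 +
      (cos (b * t / 2) ^ 2 - cos (a * t / 2) ^ 2) / (b - a) * (E j - a) ≤
      cos (E j * t / 2) ^ 2 := fun j =>
    aux_chord a b (E j) t ht hlt (hmono (Fin.mk_le_of_le_val (Nat.zero_le _)))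
      (hmono (Fin.le_def.mpr (by have := j.2; simp only; omega))) h0t hbt
  have habt : a * t ≤ b * t := by gcongr
  have hBA : cos (b * t / 2) ^ 2 ≤ cos (a * t / 2) ^ 2 := by
    apply pow_le_pow_left₀
    · exact cos_nonneg_of_mem_Icc ⟨by linarith, by linarith⟩
    · exact cos_le_cos_of_nonneg_of_le_pi (by linarith) (by linarith) (by linarith)
  generalize cos (a * t / 2) ^ 2 = A at *
  generalize cos (b * t / 2) ^ 2 = B at *
  have hs : (B - A) / (b - a) ≤ 0 := div_nonpos_of_nonpos_of_nonneg (by linarith) hd.le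
  calc A * (1 - (Eavg - a) / (b - a)) + B * ((Eavg - a) / (b - a))
      = A + (B - A) / (b - a) * (Eavg - a) := by ring
    _ ≤ A + (B - A) / (b - a) * (∑ j, p j * E j - a) := by nlinarith
    _ = A * ∑ j, p j + (B - A) / (b - a) * (∑ j, p j * E j - a * ∑ j, p j) := by
        rw [hsum]; ring
    _ = ∑ j, p j * (A + (B - A) / (b - a) * (E j - a)) := by
        rw [Finset.mul_sum, Finset.mul_sum, ← Finset.sum_sub_distrib, Finset.mul_sum,
          ← Finset.sum_add_distrib]
        exact Finset.sum_congr rfl fun j _ => by ring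
    _ ≤ _ := Finset.sum_le_sum fun j _ => mul_le_mul_of_nonneg_left (hpt j) (hp j)
end

section
/- Let f > 0 and let a, b be reals with 0 ≤ a < b ≤ f and 4·(b − a) ≤ a + b. Set t = 1/f and δ = 5(b − a)²/(24·f²). Let N ≥ 2 and let E₁ ≤ E₂ ≤ ⋯ ≤ E_N be reals with 0 ≤ E₁ ≤ a, E_N ≤ f, and E_N − E₁ ≥ b − a. Let p₁, …, p_N be nonnegative reals with Σ_j p_j = 1 and Σ_j p_j·E_j ≤ E₁ + 5(b − a)³/(24·f²). Then Σ_j p_j·cos²(E_j·t/2) ≥ cos²(b·t/2) + δ. -/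
open Real

lemma aux_lip (x y : ℝ) (h : x ≤ y) : cos x - (y - x) ≤ cos y := by
  have h1 := Real.cos_sub_cos x y
  have h2 : |sin ((x + y) / 2) * sin ((x - y) / 2)| ≤ (y - x) / 2 := by
    rw [abs_mul]
    have h3 : |sin ((x - y) / 2)| ≤ (y - x) / 2 := by
      refine (Real.abs_sin_le_abs).trans ?_
      rw [abs_of_nonpos (by linarith)]; linarith
    have h4 := Real.abs_sin_le_one ((x + y) / 2)
    nlinarith [abs_nonneg (sin ((x - y) / 2))]
  have h5 := (abs_le.mp h2).1
  linarith

lemma aux_sin (x : ℝ) (h : 0 < x) (h1 : x ≤ 1) : 3 / 4 * x ≤ sin x := by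
  have h2 := Real.sin_gt_sub_cube h
  nlinarith [mul_pos h h, mul_nonneg h.le (by nlinarith : (0:ℝ) ≤ 1 - x ^ 2)]

lemma aux_main (α β : ℝ) (ha : 0 ≤ α) (hab : α < β) (hb : β ≤ 1)
    (hs : 4 * (β - α) ≤ α + β) :
    cos β + 5 * (β - α) ^ 2 / 12 + 5 * (β - α) ^ 3 / 24 ≤ cos α := by
  have h1 := Real.cos_sub_cos β α
  have h2 := aux_sin ((β + α) / 2) (by linarith) (by linarith)
  have h3 := aux_sin ((β - α) / 2) (by linarith) (by linarith)
  obtain ⟨d, hd⟩ : ∃ d, d = β - α := ⟨_, rfl⟩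
  rw [← hd] at h1 h3 ⊢
  have hd0 : 0 < d := by linarith
  have hd1 : d ≤ 1 := by linarith
  have h4 : (3 / 2 * d) * (3 / 8 * d) ≤ sin ((β + α) / 2) * sin (d / 2) :=
    mul_le_mul (by linarith) (by linarith) (by linarith) (by linarith)
  have h5 : d ^ 3 ≤ d ^ 2 := pow_le_pow_of_le_one hd0.le hd1 (by norm_num)
  nlinarith [sq_nonneg d]

/-- Acceptance-probability lemma for one-bit phase estimation: with `t = 1/f` and
`δ = 5 (b-a)² / (24 f²)`, a state whose energy distribution `p` over eigenvalues
`E 0 ≤ ⋯ ≤ E (N-1)` (with `0 ≤ E 0 ≤ a`, `E (N-1) ≤ f`, `E (N-1) - E 0 ≥ b - a`)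
has mean energy at most `E 0 + 5 (b-a)³/(24 f²)` is accepted with probability at least
`cos²(b t / 2) + δ`. -/
theorem stmt4 (f a b : ℝ) (hf : 0 < f) (ha : 0 ≤ a) (hab : a < b) (hbf : b ≤ f)
    (hsmall : 4 * (b - a) ≤ a + b)
    (N : ℕ) (hN : 2 ≤ N) (E : Fin N → ℝ) (hmono : Monotone E)
    (hE1nonneg : 0 ≤ E ⟨0, by omega⟩) (hE1a : E ⟨0, by omega⟩ ≤ a)
    (hENf : E ⟨N - 1, by omega⟩ ≤ f)
    (hgap : b - a ≤ E ⟨N - 1, by omega⟩ - E ⟨0, by omega⟩)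
    (p : Fin N → ℝ) (hp : ∀ j, 0 ≤ p j) (hsum : ∑ j, p j = 1)
    (hmean : ∑ j, p j * E j ≤ E ⟨0, by omega⟩ + 5 * (b - a) ^ 3 / (24 * f ^ 2)) :
    cos (b * (1 / f) / 2) ^ 2 + 5 * (b - a) ^ 2 / (24 * f ^ 2) ≤
      ∑ j, p j * cos (E j * (1 / f) / 2) ^ 2 := by
  set e := E ⟨0, by omega⟩ with he
  have key : ∀ j, p j * (cos (e * (1 / f) / 2) ^ 2 + e / (2 * f)) - p j * E j * (1 / (2 * f))
      ≤ p j * cos (E j * (1 / f) / 2) ^ 2 := by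
    intro j
    have hj : e ≤ E j := hmono (Fin.mk_le_of_le_val (Nat.zero_le _))
    have h := aux_lip (e / f) (E j / f) (by gcongr)
    have h1 : cos (e * (1 / f) / 2) ^ 2 + e / (2 * f) - E j * (1 / (2 * f))
      ≤ cos (E j * (1 / f) / 2) ^ 2 := by
      rw [Real.cos_sq, Real.cos_sq (E j * (1 / f) / 2)]
      have q1 : 2 * (e * (1 / f) / 2) = e / f := by ring
      have q2 : 2 * (E j * (1 / f) / 2) = E j / f := by ring
      have q3 : e / (2 * f) = e / f / 2 := by ring
      have q4 : E j * (1 / (2 * f)) = E j / f / 2 := by ring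
      rw [q1, q2, q3, q4]; linarith
    have := mul_le_mul_of_nonneg_left h1 (hp j)
    linarith
  refine le_trans ?_ (Finset.sum_le_sum fun j _ => key j)
  rw [Finset.sum_sub_distrib, ← Finset.sum_mul, ← Finset.sum_mul, hsum]
  have hm := mul_le_mul_of_nonneg_right hmean (by positivity : 0 ≤ 1 / (2 * f))
  have hmain := aux_main (a / f) (b / f) (by positivity) (by gcongr)
    ((div_le_one hf).mpr hbf) (by
      rw [← sub_div, ← add_div, ← mul_div_assoc]; gcongr)
  have hc : cos (a / f) ≤ cos (e / f) := by
    apply Real.cos_le_cos_of_nonneg_of_le_pi (by positivity)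
    · have : a / f ≤ 1 := (div_le_one hf).mpr (by linarith)
      linarith [Real.pi_gt_three]
    · gcongr
  rw [Real.cos_sq, Real.cos_sq (e * (1 / f) / 2)]
  have q1 : 2 * (e * (1 / f) / 2) = e / f := by ring
  have q2 : 2 * (b * (1 / f) / 2) = b / f := by ring
  have q3 : (e + 5 * (b - a) ^ 3 / (24 * f ^ 2)) * (1 / (2 * f))
      = e / (2 * f) + (5 * (b / f - a / f) ^ 3 / 24) / 2 := by
    field_simp
  have q4 : 5 * (b - a) ^ 2 / (24 * f ^ 2) = (5 * (b / f - a / f) ^ 2 / 12) / 2 := by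
    field_simp
    ring
  rw [q3] at hm
  rw [q1, q2, q4]
  linarith
end

section
/- For all reals u and v with 0 ≤ u ≤ v ≤ π/2: cos u − cos v ≥ (v − u)²/2 − (v − u)³/6. -/
open Real

/-- For all reals `0 ≤ u ≤ v ≤ π/2`: `cos u - cos v ≥ (v - u)²/2 - (v - u)³/6`. -/
theorem stmt5 (u v : ℝ) (hu : 0 ≤ u) (huv : u ≤ v) (hv : v ≤ π / 2) :
    (v - u) ^ 2 / 2 - (v - u) ^ 3 / 6 ≤ cos u - cos v := by
  have hpi := Real.pi_le_four
  obtain ⟨x, hx⟩ : ∃ x, x = (v - u) / 2 := ⟨_, rfl⟩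
  obtain ⟨m, hm⟩ : ∃ m, m = (u + v) / 2 := ⟨_, rfl⟩
  have hx0 : 0 ≤ x := by linarith
  have hx1 : x ≤ 1 := by linarith
  have hd : v - u = 2 * x := by linarith
  have e1 : u = m - x := by linarith
  have e2 : v = m + x := by linarith
  have h1 : cos u - cos v = 2 * sin m * sin x := by
    rw [e1, e2, cos_sub, cos_add]; ring
  have h2 : sin x ≤ sin m :=
    sin_le_sin_of_le_of_le_pi_div_two (by linarith) (by linarith) (by linarith)
  have h3 := Real.sin_ge_sub_cube hx0
  have hx3 : x ^ 3 ≤ x := by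
    have : x ^ 2 ≤ 1 := by nlinarith
    nlinarith
  have h4 : 0 ≤ x - x ^ 3 / 6 := by linarith
  have h5 : (x - x ^ 3 / 6) ^ 2 ≤ sin m * sin x := by
    rw [sq]
    exact mul_le_mul (h3.trans h2) h3 h4 (by linarith)
  have h6 : 0 ≤ x ^ 3 * (2 - x) := mul_nonneg (by positivity) (by linarith)
  have h7 : 0 ≤ x ^ 6 := by positivity
  rw [h1, hd]
  nlinarith
end

section
/- For n ≥ 1 and a real number λ, let P_n(λ) be the n×n real tridiagonal matrix whose diagonal entries are all 2 − λ except the last, which is 1 − λ, whose entries immediately above and below the diagonal are all 1, and whose other entries are 0. Then for every real θ with cos(θ/2) ≠ 0: det(P_n(2 − 2·cos θ)) = cos((n + 1/2)·θ) / cos(θ/2). -/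
open Real

/-- The `n × n` tridiagonal matrix with diagonal entries `2 - λ` except the last, which is
`1 - λ`, with `1` immediately above and below the diagonal and `0` elsewhere. -/
def triP (n : ℕ) (lam : ℝ) : Matrix (Fin n) (Fin n) ℝ :=
  Matrix.of fun i j =>
    if i = j then (if (i : ℕ) = n - 1 then 1 - lam else 2 - lam)
    else if (i : ℕ) + 1 = (j : ℕ) ∨ (j : ℕ) + 1 = (i : ℕ) then 1 else 0

theorem triP_sub1 (n : ℕ) (l : ℝ) :
    (triP (n + 2) l).submatrix Fin.succ Fin.succ = triP (n + 1) l := by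
  ext i j
  simp [triP, Fin.ext_iff]

theorem triP_rec (n : ℕ) (l : ℝ) :
    (triP (n + 2) l).det = (2 - l) * (triP (n + 1) l).det - (triP n l).det := by
  have h00 : triP (n + 2) l 0 0 = 2 - l := by simp [triP]
  have h01 : triP (n + 2) l 0 (Fin.succ 0) = 1 := by simp [triP, Fin.ext_iff]
  have h0 : ∀ j : Fin n, triP (n + 2) l 0 j.succ.succ = 0 := by
    intro j; simp [triP, Fin.ext_iff]
  have hm : ((triP (n + 2) l).submatrix Fin.succ (Fin.succ 0).succAbove).det
      = (triP n l).det := by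
    rw [Matrix.det_succ_column_zero, Fin.sum_univ_succ]
    have e1 : ((triP (n + 2) l).submatrix Fin.succ (Fin.succ 0).succAbove) 0 0 = 1 := by
      simp [triP, Fin.ext_iff]
    have e2 : ∀ i : Fin n,
        ((triP (n + 2) l).submatrix Fin.succ (Fin.succ 0).succAbove) i.succ 0 = 0 := by
      intro i; simp [triP, Fin.ext_iff]
    have e3 : (((triP (n + 2) l).submatrix Fin.succ (Fin.succ 0).succAbove).submatrix
        (Fin.succAbove 0) Fin.succ) = triP n l := by
      ext i j
      have := i.isLt
      have h : ((i : ℕ) + 1 = n) ↔ ((i : ℕ) = n - 1) := by omega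
      simp [triP, Fin.ext_iff, h]
    rw [e1, e3]
    simp only [e2]
    simp
  rw [Matrix.det_succ_row_zero, Fin.sum_univ_succ, Fin.sum_univ_succ, hm, h00, h01]
  simp only [h0]
  rw [Fin.succAbove_zero, triP_sub1]
  simp
  ring

theorem triP_aux (θ : ℝ) (n : ℕ) :
    (triP n (2 - 2 * cos θ)).det * cos (θ / 2) = cos (((n : ℝ) + 1 / 2) * θ) := by
  induction n using Nat.twoStepInduction with
  | zero => simp; congr 1; ring
  | one =>
    have h1 : (triP 1 (2 - 2 * cos θ)).det = 2 * cos θ - 1 := by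
      simp [triP]; ring
    have h2 : (((1 : ℕ) : ℝ) + 1 / 2) * θ = 3 * (θ / 2) := by push_cast; ring
    have h3 : cos θ = 2 * cos (θ / 2) ^ 2 - 1 := by
      rw [← cos_two_mul]; congr 1; ring
    rw [h1, h2, cos_three_mul, h3]; ring
  | more n ih0 ih1 =>
    rw [triP_rec, sub_mul, mul_assoc, ih0, ih1]
    have a : (((n + 2 : ℕ) : ℝ) + 1 / 2) * θ = (((n + 1 : ℕ) : ℝ) + 1 / 2) * θ + θ := by
      push_cast; ring
    have b : ((n : ℝ) + 1 / 2) * θ = (((n + 1 : ℕ) : ℝ) + 1 / 2) * θ - θ := by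
      push_cast; ring
    rw [a, b, cos_add, cos_sub]; ring

/-- Closed form for the tridiagonal determinant:
`det (P_n (2 - 2 cos θ)) = cos ((n + 1/2) θ) / cos (θ/2)` whenever `cos (θ/2) ≠ 0`. -/
theorem stmt11 (n : ℕ) (hn : 1 ≤ n) (θ : ℝ) (hθ : cos (θ / 2) ≠ 0) :
    (triP n (2 - 2 * cos θ)).det = cos (((n : ℝ) + 1 / 2) * θ) / cos (θ / 2) := by
  rw [eq_div_iff hθ, triP_aux]
end

section
/- For n ≥ 1, let M_n be the n×n real symmetric tridiagonal matrix whose diagonal entries are all 2 except the last, which is 1, with entries 1 immediately above and below the diagonal and 0 elsewhere. Then the eigenvalues of M_n are exactly the n pairwise-distinct real numbers 4·sin²((2k − 1)·π/(4n + 2)) for k = 1, …, n. -/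
open Real

/-- The `n × n` symmetric tridiagonal matrix with diagonal `(2, …, 2, 1)` (last entry `1`),
`1` immediately above and below the diagonal, and `0` elsewhere. -/
def triM (n : ℕ) : Matrix (Fin n) (Fin n) ℝ :=
  Matrix.of fun i j =>
    if i = j then (if (i : ℕ) = n - 1 then 1 else 2)
    else if (i : ℕ) + 1 = (j : ℕ) ∨ (j : ℕ) + 1 = (i : ℕ) then 1 else 0


lemma triM_mulVec (n : ℕ) (f : ℕ → ℝ) (i : Fin n) :
    ((triM n).mulVec (fun j => f j)) i =
      (if (i : ℕ) = n - 1 then 1 else 2) * f i + (if (i : ℕ) + 1 < n then f (i + 1) else 0)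
        + (if (i : ℕ) = 0 then 0 else f (i - 1)) := by
  obtain ⟨i, hi⟩ := i
  have h : ((triM n).mulVec (fun j => f j)) ⟨i, hi⟩ = ∑ j ∈ Finset.range n,
      ((if i = j then (if i = n - 1 then 1 else 2) * f j else 0)
        + (if i + 1 = j then f j else 0)
        + (if i - 1 = j then (if i = 0 then 0 else f j) else 0)) := by
    rw [← Fin.sum_univ_eq_sum_range (fun j => ((if i = j then (if i = n - 1 then 1 else 2) * f j else 0)
        + (if i + 1 = j then f j else 0)
        + (if i - 1 = j then (if i = 0 then 0 else f j) else 0))) n]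
    simp only [Matrix.mulVec, dotProduct, triM, Matrix.of_apply, Fin.ext_iff]
    refine Finset.sum_congr rfl fun j _ => ?_
    by_cases h1 : i = (j : ℕ)
    · have h2 : ¬ (i + 1 = (j : ℕ)) := by omega
      by_cases h3 : i = 0
      · simp only [if_pos h1, if_neg h2, if_pos h3]; simp
      · have h4 : ¬ (i - 1 = (j : ℕ)) := by omega
        simp only [if_pos h1, if_neg h2, if_neg h4]; ring
    · by_cases h2 : i + 1 = (j : ℕ)
      · have h4 : ¬ (i - 1 = (j : ℕ)) := by omega
        simp [h1, h2, h4]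
      · by_cases h3 : (j : ℕ) + 1 = i
        · have h4 : i - 1 = (j : ℕ) := by omega
          have h5 : i ≠ 0 := by omega
          simp [h1, h2, h3, h4, h5]
        · by_cases h5 : i = 0
          · simp only [if_neg h1, if_neg h2, if_pos h5, or_self, h2, h3]; simp
          · have h4 : ¬ (i - 1 = (j : ℕ)) := by omega
            simp [h1, h2, h3, h4]
  rw [h, Finset.sum_add_distrib, Finset.sum_add_distrib]
  simp only [Finset.sum_ite_eq, Finset.mem_range, hi, if_true]
  rw [if_pos (show i - 1 < n by omega)]

lemma mem_spec (n : ℕ) (t : ℝ) (h0 : sin t ≠ 0) (hn : 1 ≤ n)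
    (ht : sin ((n + 1 : ℝ) * t) = sin (n * t)) :
    2 - 2 * cos t ∈ spectrum ℝ (triM n) := by
  rw [spectrum.mem_iff, Matrix.isUnit_iff_isUnit_det, isUnit_iff_ne_zero, not_not,
    ← Matrix.exists_mulVec_eq_zero_iff]
  set f : ℕ → ℝ := fun j => (-1) ^ j * sin ((j + 1 : ℝ) * t) with hf
  refine ⟨fun j => f j, ?_, ?_⟩
  · intro h
    have := congrFun h ⟨0, hn⟩
    simp [hf] at this
    exact h0 this
  · have hrec : ∀ x : ℝ, sin (x + t) + sin (x - t) = 2 * cos t * sin x := by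
      intro x; rw [sin_add, sin_sub]; ring
    ext i
    rw [Matrix.sub_mulVec, Pi.sub_apply, triM_mulVec, Algebra.algebraMap_eq_smul_one,
      Matrix.smul_mulVec, Matrix.one_mulVec]
    simp only [Pi.smul_apply, smul_eq_mul, Pi.zero_apply]
    obtain ⟨i, hi⟩ := i
    have e1 : (if i = 0 then 0 else f (i - 1)) = - (-1) ^ i * sin ((i + 1 : ℝ) * t - t) := by
      rcases i with _ | i
      · simp
      · simp [hf]; rw [pow_succ]; ring_nf
    have e2 : f (i + 1) = - (-1) ^ i * sin ((i + 1 : ℝ) * t + t) := by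
      simp [hf]; rw [pow_succ]; ring_nf
    have e3 : (if i = n - 1 then 1 else 2) * f i + (if i + 1 < n then f (i + 1) else 0)
        = 2 * f i + f (i + 1) := by
      by_cases h : i + 1 < n
      · rw [if_neg (by omega), if_pos h]
      · have : n = i + 1 := by omega
        subst this
        rw [if_pos (by omega), if_neg h, e2]
        push_cast at ht
        have h2 : (i + 1 : ℝ) * t + t = (i + 1 + 1 : ℝ) * t := by ring
        rw [h2, ht]
        simp only [hf]; ring
    have := hrec ((i + 1 : ℝ) * t)
    simp only []
    rw [e3, e1, e2]
    simp only [hf]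
    linear_combination ((-1 : ℝ)) ^ i * this

/-- The eigenvalues of `M_n` are exactly the `n` pairwise-distinct real numbers
`4 sin² ((2k - 1) π / (4n + 2))` for `k = 1, …, n`. -/
theorem stmt13 (n : ℕ) (hn : 1 ≤ n) :
    Function.Injective
        (fun k : Fin n => 4 * sin ((2 * (k : ℕ) + 1) * π / (4 * n + 2)) ^ 2) ∧
      spectrum ℝ (triM n) =
        Set.range (fun k : Fin n => 4 * sin ((2 * (k : ℕ) + 1) * π / (4 * n + 2)) ^ 2) := by
  have hpi := pi_pos
  have hN : (0 : ℝ) < 2 * n + 1 := by positivity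
  have key : ∀ k : Fin n, 4 * sin ((2 * (k : ℕ) + 1) * π / (4 * n + 2)) ^ 2
      = 2 - 2 * cos ((2 * (k : ℕ) + 1) * π / (2 * n + 1)) := by
    intro k
    rw [show (2 * (k : ℕ) + 1) * π / (2 * n + 1) = 2 * ((2 * (k : ℕ) + 1) * π / (4 * n + 2)) by
      field_simp; ring, cos_two_mul, cos_sq']
    ring
  have hpos : ∀ k : Fin n, 0 < (2 * (k : ℕ) + 1) * π / (2 * n + 1) := fun k => by positivity
  have hlt : ∀ k : Fin n, (2 * (k : ℕ) + 1) * π / (2 * n + 1) < π := fun k => by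
    rw [div_lt_iff₀ hN, mul_comm]
    have : ((k : ℕ) : ℝ) < n := by exact_mod_cast k.2
    gcongr
  have hinj : Function.Injective
        (fun k : Fin n => 4 * sin ((2 * (k : ℕ) + 1) * π / (4 * n + 2)) ^ 2) := by
    intro a b hab
    simp only [key] at hab
    have h := injOn_cos ⟨(hpos a).le, (hlt a).le⟩ ⟨(hpos b).le, (hlt b).le⟩ (by linarith)
    rw [div_left_inj' hN.ne', mul_left_inj' hpi.ne'] at h
    have : ((a : ℕ) : ℝ) = (b : ℕ) := by linarith
    exact Fin.ext (by exact_mod_cast this)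
  refine ⟨hinj, ?_⟩
  have hne : (triM n).charpoly ≠ 0 := (Matrix.charpoly_monic _).ne_zero
  have hs : spectrum ℝ (triM n) = ((triM n).charpoly.roots.toFinset : Set ℝ) := by
    ext x
    rw [Matrix.mem_spectrum_iff_isRoot_charpoly]
    simp [hne]
  have hsub : Set.range (fun k : Fin n => 4 * sin ((2 * (k : ℕ) + 1) * π / (4 * n + 2)) ^ 2)
      ⊆ spectrum ℝ (triM n) := by
    rintro _ ⟨k, rfl⟩
    simp only [key]
    apply mem_spec n _ (sin_pos_of_pos_of_lt_pi (hpos k) (hlt k)).ne' hn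
    rw [← sin_pi_sub, ← sin_add_nat_mul_two_pi _ (k : ℕ)]
    congr 1
    field_simp
    ring
  symm
  apply Set.eq_of_subset_of_ncard_le hsub
  · rw [Set.ncard_range_of_injective hinj, hs, Set.ncard_coe_finset, Nat.card_fin]
    calc _ ≤ _ := Multiset.toFinset_card_le _
      _ ≤ _ := Polynomial.card_roots' _
      _ = n := by rw [Matrix.charpoly_natDegree_eq_dim, Fintype.card_fin]
end

section
/- Let l, w, m be natural numbers with m ≥ l + w. Let k₁, k₂ be integers with 1 ≤ k₁ ≤ 2^l and 1 ≤ k₂ ≤ 2^l, and let y₁, y₂ be integers with 0 ≤ y₁ < 2^w and 0 ≤ y₂ < 2^w. If (k₁/2^l)·(1 − y₁/2^m) = (k₂/2^l)·(1 − y₂/2^m), then k₁ = k₂ and y₁ = y₂. -/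
/-- Distinct classical witnesses receive distinct acceptance probabilities: for `m ≥ l + w`,
`1 ≤ k₁, k₂ ≤ 2^l`, and `0 ≤ y₁, y₂ < 2^w`, if
`(k₁/2^l)(1 - y₁/2^m) = (k₂/2^l)(1 - y₂/2^m)` then `k₁ = k₂` and `y₁ = y₂`. -/
theorem stmt18 (l w m : ℕ) (hm : l + w ≤ m)
    (k₁ k₂ y₁ y₂ : ℤ)
    (hk₁ : 1 ≤ k₁) (hk₁' : k₁ ≤ 2 ^ l) (hk₂ : 1 ≤ k₂) (hk₂' : k₂ ≤ 2 ^ l)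
    (hy₁ : 0 ≤ y₁) (hy₁' : y₁ < 2 ^ w) (hy₂ : 0 ≤ y₂) (hy₂' : y₂ < 2 ^ w)
    (heq : ((k₁ : ℝ) / 2 ^ l) * (1 - (y₁ : ℝ) / 2 ^ m) =
      ((k₂ : ℝ) / 2 ^ l) * (1 - (y₂ : ℝ) / 2 ^ m)) :
    k₁ = k₂ ∧ y₁ = y₂ := by
  have hM : (2:ℤ) ^ l * 2 ^ w ≤ 2 ^ m := by
    rw [← pow_add]; exact pow_le_pow_right₀ (by norm_num) hm
  have hL : (0:ℤ) < 2 ^ l := by positivity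
  have hR : (k₁ : ℝ) * (2 ^ m - y₁) = k₂ * (2 ^ m - y₂) := by
    field_simp at heq
    linarith
  have hZ : k₁ * (2 ^ m - y₁) = k₂ * (2 ^ m - y₂) := by exact_mod_cast hR
  have b₁ : k₁ * y₁ < 2 ^ m := by nlinarith
  have b₂ : k₂ * y₂ < 2 ^ m := by nlinarith
  have c₁ : 0 ≤ k₁ * y₁ := by positivity
  have c₂ : 0 ≤ k₂ * y₂ := by positivity
  have hk : k₁ = k₂ := by
    rcases lt_trichotomy k₁ k₂ with h | h | h
    · nlinarith
    · exact h
    · nlinarith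
  refine ⟨hk, ?_⟩
  subst hk
  have := mul_left_cancel₀ (by omega : k₁ ≠ 0) hZ
  linarith
end
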